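/- Let μ be any σ-invariant Borel probability measure on X. For every N ≥ 2, μ( ⋃_{i=0}^{h N − 1} σ^i(C N) ) > 1 − 1 / b^{N−1}, where C N = { x ∈ X : the block x_0 x_1 … x_{h N − 1} equals B N }. -/

import Mathlib

open MeasureTheory Filter Topology
open scoped ENNReal

/-- `m`-fold concatenation of a word. -/
def wordPow (w : List ℕ) (m : ℕ) : List ℕ := (List.replicate m w).flatten

/-- The words of the generalized del Junco–Rudolph construction:
`B 0 = [0]`, `B (k+1) = (B k)^(a·b^k) ++ [1] ++ (B k)^((b-a)·b^k)`. -/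
def Bword (b a : ℕ) : ℕ → List ℕ
  | 0 => [0]
  | k + 1 => wordPow (Bword b a k) (a * b ^ k) ++ [1] ++ wordPow (Bword b a k) ((b - a) * b ^ k)

/-- The height sequence: `h 0 = 1`, `h (k+1) = b^(k+1) * h k + 1`. -/
def hseq (b : ℕ) : ℕ → ℕ
  | 0 => 1
  | k + 1 => b ^ (k + 1) * hseq b k + 1

/-- The word `w` occurs in the word `v` at position `p` (0-based). -/
def OccursAt (w v : List ℕ) (p : ℕ) : Prop :=
  p + w.length ≤ v.length ∧ (v.drop p).take w.length = w

/-- The block of `x` of length `w.length` starting at index `m` equals the word `w`. -/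
def BlockEq (x : ℤ → ℕ) (m : ℤ) (w : List ℕ) : Prop :=
  ∀ i : ℕ, i < w.length → x (m + i) = w.getD i 0

/-- Membership in the subshift `X`: every finite block of `x` occurs as a consecutive
subword of some `B k`. -/
def InX (b a : ℕ) (x : ℤ → ℕ) : Prop :=
  ∀ (m : ℤ) (l : ℕ), ∃ k p, OccursAt (List.ofFn fun i : Fin l => x (m + (i : ℕ))) (Bword b a k) p

/-- The left shift `(σ x) n = x (n+1)` on `{0,1}^ℤ`. -/
def shiftMap (x : ℤ → ℕ) : ℤ → ℕ := fun n => x (n + 1)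

/-- The cylinder set `C N ⊆ X` of points whose block `x_0 … x_{h N - 1}` equals `B N`. -/
def Cset (b a N : ℕ) : Set (ℤ → ℕ) :=
  {x | InX b a x ∧ BlockEq x 0 (Bword b a N)}

inductive GoodW (B : List ℕ) : List ℕ → Prop
  | nil : GoodW B []
  | blk (w : List ℕ) : GoodW B w → GoodW B (B ++ w)
  | spc (w : List ℕ) : GoodW B w → GoodW B ((1 :: B) ++ w)

theorem GoodW.append {B u v : List ℕ} (hu : GoodW B u) (hv : GoodW B v) : GoodW B (u ++ v) := by
  induction hu with
  | nil => simpa using hv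
  | blk w _ ih => rw [List.append_assoc]; exact GoodW.blk _ ih
  | spc w _ ih => rw [List.append_assoc]; exact GoodW.spc _ ih

theorem wordPow_succ' (w : List ℕ) (m : ℕ) : wordPow w (m + 1) = w ++ wordPow w m := by
  simp [wordPow, List.replicate_succ]

theorem GoodW.pow {B u : List ℕ} (hu : GoodW B u) (m : ℕ) : GoodW B (wordPow u m) := by
  induction m with
  | zero => simpa [wordPow] using GoodW.nil
  | succ m ih => rw [wordPow_succ']; exact hu.append ih

theorem GoodW.cover {B v : List ℕ} (hv : GoodW B v) : ∀ p, p < v.length →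
    ∃ s t, v = s ++ B ++ t ∧ ((s.length ≤ p ∧ p < s.length + B.length) ∨ s.length = p + 1) := by
  induction hv with
  | nil => intro p hp; simp at hp
  | blk w _ ih =>
    intro p hp
    by_cases h : p < B.length
    · exact ⟨[], w, by simp, Or.inl ⟨by simp, by simpa using h⟩⟩
    · obtain ⟨s, t, e, hs⟩ := ih (p - B.length) (by simp at hp; omega)
      refine ⟨B ++ s, t, by rw [e]; simp, ?_⟩
      simp only [List.length_append]; omega
  | spc w _ ih =>
    intro p hp
    by_cases h : p < B.length + 1
    · refine ⟨[1], w, by simp, ?_⟩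
      simp only [List.length_singleton]; omega
    · obtain ⟨s, t, e, hs⟩ := ih (p - (B.length + 1)) (by simp at hp; omega)
      refine ⟨(1 :: B) ++ s, t, by rw [e]; simp, ?_⟩
      simp only [List.length_append, List.length_cons]; omega

theorem Bword_good (b a : ℕ) (hb : 2 ≤ b) (ha1 : 1 ≤ a) (ha2 : a ≤ b - 1) (N k : ℕ) :
    GoodW (Bword b a N) (Bword b a (N + k)) ∧ GoodW (Bword b a N) (1 :: Bword b a (N + k)) := by
  induction k with
  | zero =>
    exact ⟨by simpa using GoodW.blk (B := Bword b a N) [] GoodW.nil,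
      by simpa using GoodW.spc (B := Bword b a N) [] GoodW.nil⟩
  | succ k ih =>
    obtain ⟨h1, h2⟩ := ih
    have hp : 0 < b ^ (N + k) := Nat.pow_pos (by omega)
    obtain ⟨m, hm⟩ : ∃ m, a * b ^ (N + k) = m + 1 :=
      Nat.exists_eq_succ_of_ne_zero (Nat.mul_pos (by omega) hp).ne'
    obtain ⟨n, hn⟩ : ∃ n, (b - a) * b ^ (N + k) = n + 1 :=
      Nat.exists_eq_succ_of_ne_zero (Nat.mul_pos (by omega) hp).ne'
    have e : Bword b a (N + (k + 1)) = wordPow (Bword b a (N + k)) (m + 1) ++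
        ((1 :: Bword b a (N + k)) ++ wordPow (Bword b a (N + k)) n) := by
      rw [← add_assoc, Bword, hm, hn, wordPow_succ' _ n]; simp
    have h3 := h2.append (h1.pow n)
    refine ⟨by rw [e]; exact (h1.pow _).append h3, ?_⟩
    rw [e, wordPow_succ']
    exact (h2.append (h1.pow m)).append h3

theorem Bword_length (b a : ℕ) (ha2 : a ≤ b) (k : ℕ) :
    (Bword b a k).length = hseq b k := by
  induction k with
  | zero => rfl
  | succ k ih =>
    have : a * b ^ k + (b - a) * b ^ k = b ^ (k + 1) := by
      rw [← add_mul, Nat.add_sub_cancel' ha2, pow_succ, mul_comm]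
    simp only [Bword, wordPow, hseq, List.length_append, List.length_flatten, List.map_replicate,
      List.sum_replicate, List.length_singleton, ih, ← this, smul_eq_mul]
    ring

theorem hseq_mono (b : ℕ) (hb : 2 ≤ b) : Monotone (hseq b) := by
  refine monotone_nat_of_le_succ fun k => ?_
  rw [hseq]
  have : 0 < b ^ (k + 1) := Nat.pow_pos (by omega)
  nlinarith

theorem hseq_lower (b : ℕ) (hb : 2 ≤ b) (N : ℕ) : b ^ N ≤ hseq b N := by
  cases N with
  | zero => simp [hseq]
  | succ k =>
    rw [hseq]
    have h1 : hseq b 0 ≤ hseq b k := hseq_mono b hb (Nat.zero_le _)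
    have : 0 < b ^ (k + 1) := Nat.pow_pos (by omega)
    have h0 : hseq b 0 = 1 := rfl
    nlinarith

theorem InX_cover (b a : ℕ) (hb : 2 ≤ b) (ha1 : 1 ≤ a) (ha2 : a ≤ b - 1) (N : ℕ)
    (x : ℤ → ℕ) (hx : InX b a x) :
    (∃ i < hseq b N, BlockEq x (-(i : ℤ)) (Bword b a N)) ∨ BlockEq x 1 (Bword b a N) := by
  set H := hseq b N with hH
  have hlB : (Bword b a N).length = H := Bword_length b a (by omega) N
  obtain ⟨k, p, hlen, heq⟩ := hx (-(H : ℤ)) (2 * H + 1)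
  simp only [List.length_ofFn] at hlen heq
  have hk : N ≤ k := by
    by_contra h
    have := hseq_mono b hb (show k ≤ N by omega)
    rw [Bword_length b a (by omega)] at hlen
    omega
  obtain ⟨k, rfl⟩ := Nat.exists_eq_add_of_le hk
  obtain ⟨s, t, e, hs⟩ := (Bword_good b a hb ha1 ha2 N k).1.cover (p + H) (by omega)
  have key : ∀ j < 2 * H + 1, x (-(H : ℤ) + j) = (Bword b a (N + k)).getD (p + j) 0 := by
    intro j hj
    have := congrArg (fun l => l.getD j 0) heq
    simp [List.getD_eq_getElem?_getD, List.getElem?_drop, hj, - List.ofFn_succ] at this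
    simp [List.getD_eq_getElem?_getD, this]
  have key2 : ∀ i < H, (Bword b a (N + k)).getD (s.length + i) 0 = (Bword b a N).getD i 0 := by
    intro i hi
    rw [e]
    simp only [List.getD_eq_getElem?_getD]
    rw [List.append_assoc, List.getElem?_append_right (by omega), List.getElem?_append_left (by omega)]
    congr 2; omega
  rw [hlB] at hs
  have hgen : BlockEq x ((s.length : ℤ) - p - H) (Bword b a N) := by
    intro i hi
    rw [hlB] at hi
    rw [← key2 i hi]
    have := key (s.length + i - p) (by omega)
    rw [show p + (s.length + i - p) = s.length + i by omega] at this
    rw [← this]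
    congr 1; omega
  rcases hs with hs | hs
  · left
    refine ⟨p + H - s.length, by omega, ?_⟩
    convert hgen using 1; omega
  · right
    convert hgen using 1; omega

theorem shift_iter (i : ℕ) (x : ℤ → ℕ) (n : ℤ) : shiftMap^[i] x n = x (n + i) := by
  induction i generalizing x with
  | zero => simp
  | succ i ih =>
    rw [Function.iterate_succ_apply, ih]; simp only [shiftMap]; congr 1; push_cast; ring

theorem InX_shift (b a : ℕ) (x : ℤ → ℕ) (hx : InX b a x) (c : ℤ) :
    InX b a (fun n => x (n + c)) := by
  intro m l
  obtain ⟨k, p, h⟩ := hx (m + c) l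
  refine ⟨k, p, ?_⟩
  convert h using 4
  ring

theorem measurable_block (m : ℤ) (w : List ℕ) : MeasurableSet {x : ℤ → ℕ | BlockEq x m w} := by
  simp only [BlockEq, Set.ofPred_forall]
  refine MeasurableSet.iInter fun i => MeasurableSet.iInter fun _ => ?_
  exact measurableSet_eq_fun (measurable_pi_apply _) measurable_const

/-- for any invariant Borel probability measure `μ` on `X` and `N ≥ 2`, the
tower `⋃_{i<h N} σ^i (C N)` has measure greater than `1 - 1 / b^(N-1)`. -/
theorem measure_tower_large (b a : ℕ) (hb : 2 ≤ b) (ha1 : 1 ≤ a) (ha2 : a ≤ b - 1)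
    (μ : Measure (ℤ → ℕ)) (hprob : IsProbabilityMeasure μ)
    (hsupp : μ {y | InX b a y}ᶜ = 0) (hinv : MeasurePreserving shiftMap μ μ)
    (N : ℕ) (hN : 2 ≤ N) :
    μ (⋃ i ∈ Finset.range (hseq b N), shiftMap^[i] '' Cset b a N) >
      1 - 1 / (b : ℝ≥0∞) ^ (N - 1) := by
  set H := hseq b N with hH
  set A : Set (ℤ → ℕ) := ⋃ i ∈ Finset.range H, {x | BlockEq x (-(i : ℤ)) (Bword b a N)} with hA
  have memA : ∀ x, x ∈ A ↔ ∃ i < H, BlockEq x (-(i : ℤ)) (Bword b a N) := by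
    intro x; simp [hA]
  have mA : MeasurableSet A :=
    Finset.measurableSet_biUnion _ fun i _ => measurable_block _ _
  have hAT : A ⊆ (⋃ i ∈ Finset.range H, shiftMap^[i] '' Cset b a N) ∪ {y | InX b a y}ᶜ := by
    intro x hx
    by_cases hX : InX b a x
    · left
      obtain ⟨i, hi, hB⟩ := (memA x).1 hx
      simp only [Set.mem_iUnion]
      refine ⟨i, Finset.mem_range.2 hi, fun n => x (n + (-(i : ℤ))), ⟨InX_shift b a x hX _, ?_⟩, ?_⟩
      · intro j hj
        rw [← hB j hj]
        dsimp only
        congr 1; ring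
      · funext n
        rw [shift_iter]; congr 1; ring
    · right; exact hX
  have hTA : μ A ≤ μ (⋃ i ∈ Finset.range H, shiftMap^[i] '' Cset b a N) := by
    refine (measure_mono hAT).trans ((measure_union_le _ _).trans ?_)
    rw [hsupp, add_zero]
  have claim : ∀ x, InX b a x → ∀ i j : ℕ, i < j → j ≤ H →
      shiftMap^[i] x ∉ A → shiftMap^[j] x ∈ A := by
    intro x hx i j hij hj hn
    have hy : InX b a (shiftMap^[i] x) := by
      have := InX_shift b a x hx i
      convert this using 1
      funext n; rw [shift_iter]
    rcases InX_cover b a hb ha1 ha2 N _ hy with h | h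
    · exact absurd ((memA _).2 h) hn
    · refine (memA _).2 ⟨j - i - 1, by omega, ?_⟩
      intro l hl
      rw [← h l hl, shift_iter, shift_iter]
      congr 1; omega
  have hU : ((H + 1 : ℕ) : ℝ≥0∞) * μ Aᶜ ≤ 1 := by
    have hmeas : ∀ i : ℕ, MeasurableSet (shiftMap^[i] ⁻¹' Aᶜ) := fun i =>
      (hinv.iterate i).measurable mA.compl
    have hd : Set.Pairwise (↑(Finset.range (H + 1)))
        (Function.onFun (AEDisjoint μ) fun i : ℕ => shiftMap^[i] ⁻¹' Aᶜ) := by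
      intro i hi j hj hij
      simp only [Finset.coe_range, Set.mem_Iio] at hi hj
      refine measure_mono_null ?_ hsupp
      rintro x ⟨h1, h2⟩ hX
      rcases lt_or_gt_of_ne hij with h | h
      · exact h2 (claim x hX i j h (by omega) h1)
      · exact h1 (claim x hX j i h (by omega) h2)
    have := measure_biUnion_finset₀ hd fun i _ => (hmeas i).nullMeasurableSet
    have h2 : ∀ i ∈ Finset.range (H + 1), μ (shiftMap^[i] ⁻¹' Aᶜ) = μ Aᶜ := fun i _ =>
      (hinv.iterate i).measure_preimage mA.compl.nullMeasurableSet
    rw [Finset.sum_congr rfl h2, Finset.sum_const, Finset.card_range, nsmul_eq_mul] at this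
    rw [← this]
    exact prob_le_one
  have hlow : b ^ (N - 1) < H + 1 :=
    Nat.lt_succ_of_le ((Nat.pow_le_pow_right (by omega) (by omega)).trans (hseq_lower b hb N))
  have hpos : 0 < b ^ (N - 1) := Nat.pow_pos (by omega)
  have hlt : μ Aᶜ < 1 / (b : ℝ≥0∞) ^ (N - 1) := by
    have h1 : μ Aᶜ ≤ ((H + 1 : ℕ) : ℝ≥0∞)⁻¹ := by
      rw [ENNReal.le_inv_iff_mul_le, mul_comm]; exact hU
    refine h1.trans_lt ?_
    rw [one_div, ENNReal.inv_lt_inv]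
    exact_mod_cast hlow
  have hle : 1 / (b : ℝ≥0∞) ^ (N - 1) ≤ 1 := by
    rw [one_div, ENNReal.inv_le_one]
    exact_mod_cast hpos
  refine lt_of_lt_of_le ?_ hTA
  have hsum : μ A + μ Aᶜ = 1 := prob_add_prob_compl mA
  refine ENNReal.sub_lt_of_lt_add hle ?_
  calc (1 : ℝ≥0∞) = μ A + μ Aᶜ := hsum.symm
    _ < _ := ENNReal.add_lt_add_left (measure_ne_top _ _) hlt
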